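/- Every uncrossable family of cycles is strongly uncrossable: if 𝒞 is uncrossable, C₁, C₂ ∈ 𝒞, and v, w are two vertices lying on both C₁ and C₂, then there exist a v-w-path P₁ in C₁ and a v-w-path P₂ in C₂ such that both edge sets P₁ + P₂ and (C₁ − P₁) + (C₂ − P₂) contain a cycle of 𝒞. -/

import Mathlib

open Finset

variable {V : Type*} [DecidableEq V]

/-- The edge set of a (simple) cycle in `G`. -/
def IsCycleEdges (G : SimpleGraph V) (s : Finset (Sym2 V)) : Prop :=
  ∃ (u : V) (c : G.Walk u u), c.IsCycle ∧ c.edges.toFinset = s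

/-- The edge set of a (simple) path from `v` to `w` in `G`. -/
def IsPathEdges (G : SimpleGraph V) (v w : V) (s : Finset (Sym2 V)) : Prop :=
  ∃ p : G.Walk v w, p.IsPath ∧ p.edges.toFinset = s

/-- The set of vertices covered by an edge set. -/
def edgeVerts (s : Finset (Sym2 V)) : Set V := {x | ∃ e ∈ s, x ∈ e}

/-- A family of cycles (given by their edge sets) is uncrossable:
for `C₁, C₂` in the family and a `v`-`w`-path `P₂` contained in `C₂` sharing only its
endpoints `v, w` with `C₁`, there is a `v`-`w`-path `P₁` contained in `C₁` such that
`P₁ + P₂` belongs to the family and `(C₁ - P₁) + (C₂ - P₂)` contains a member of the family. -/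
def Uncrossable (G : SimpleGraph V) (𝒞 : Set (Finset (Sym2 V))) : Prop :=
  ∀ C₁ ∈ 𝒞, ∀ C₂ ∈ 𝒞, ∀ v w : V, v ≠ w → ∀ P₂ : Finset (Sym2 V),
    IsPathEdges G v w P₂ → P₂ ⊆ C₂ →
    edgeVerts P₂ ∩ edgeVerts C₁ ⊆ {v, w} →
    v ∈ edgeVerts C₁ → w ∈ edgeVerts C₁ →
    ∃ P₁ : Finset (Sym2 V), IsPathEdges G v w P₁ ∧ P₁ ⊆ C₁ ∧
      (P₁ ∪ P₂) ∈ 𝒞 ∧ ∃ C ∈ 𝒞, C ⊆ (C₁ \ P₁) ∪ (C₂ \ P₂)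

/-- An edge set is good (w.r.t. a family `𝒞` of cycles) if it contains the edge set of a
cycle in `𝒞`. -/
def Good (𝒞 : Set (Finset (Sym2 V))) (s : Finset (Sym2 V)) : Prop :=
  ∃ C ∈ 𝒞, C ⊆ s

/-- A family of cycles is strongly uncrossable: for `C₁, C₂` in the family and two
vertices `v, w` lying on both cycles, there are `v`-`w`-paths `P₁ ⊆ C₁` and `P₂ ⊆ C₂`
such that both `P₁ + P₂` and `(C₁ - P₁) + (C₂ - P₂)` are good. -/
def StronglyUncrossable (G : SimpleGraph V) (𝒞 : Set (Finset (Sym2 V))) : Prop :=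
  ∀ C₁ ∈ 𝒞, ∀ C₂ ∈ 𝒞, ∀ v w : V, v ≠ w →
    v ∈ edgeVerts C₁ → v ∈ edgeVerts C₂ → w ∈ edgeVerts C₁ → w ∈ edgeVerts C₂ →
    ∃ P₁ P₂ : Finset (Sym2 V),
      IsPathEdges G v w P₁ ∧ P₁ ⊆ C₁ ∧ IsPathEdges G v w P₂ ∧ P₂ ⊆ C₂ ∧
      Good 𝒞 (P₁ ∪ P₂) ∧ Good 𝒞 ((C₁ \ P₁) ∪ (C₂ \ P₂))

/-!
Vertices `v ≠ w` split `C₁` into paths `P, P'` and `C₂` into paths `Q, Q'`. The key claim is that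
any `v`-`w`-path in one of the two cycles forms a good set with one of the two halves of the other.
So in the `2 × 2` table recording which of the unions of a half of `C₁` with a half of `C₂` are
good, every row and every column has a good entry; hence one of the two diagonals is entirely good,
and this is strong uncrossability.

The key claim is proved by induction on the path. Let `Q₀` be its initial piece, up to its first
return `x` to the other cycle `D`. Exchanging along `Q₀` gives a `v`-`x`-path `S` in `D` with
`S + Q₀` in the family. If `S` has no inner vertex `w`, it stays in one half of `D`, and the claim
holds. Otherwise `w` splits `S` into `S₁` and `S₂`, each of which stays in one half of `D`, and the
induction hypothesis applies to the remainder of the path and the cycle `S + Q₀`, split at `x` and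
`w` into `S₂` and `S₁ + Q₀`.
-/

open SimpleGraph

variable {G : SimpleGraph V} {𝒞 : Set (Finset (Sym2 V))} {B B' C P s t : Finset (Sym2 V)}
  {v w x : V}

omit [DecidableEq V] in
lemma edgeVerts_mono (h : s ⊆ t) : edgeVerts s ⊆ edgeVerts t :=
  fun _ ⟨e, he, hx⟩ => ⟨e, h he, hx⟩

lemma edgeVerts_union (s t : Finset (Sym2 V)) :
    edgeVerts (s ∪ t) = edgeVerts s ∪ edgeVerts t := by
  ext x
  simp [edgeVerts, or_and_right, exists_or]

lemma mem_support_of_mem_edgeVerts {p : G.Walk v w} (hx : x ∈ edgeVerts p.edges.toFinset) :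
    x ∈ p.support :=
  let ⟨_, he, hxe⟩ := hx
  Walk.mem_support_of_mem_edges (List.mem_toFinset.mp he) hxe

lemma IsPathEdges.symm (hP : IsPathEdges G v w P) : IsPathEdges G w v P :=
  let ⟨p, hp, hpP⟩ := hP
  ⟨p.reverse, hp.reverse, by simpa using hpP⟩

lemma IsPathEdges.left_mem_edgeVerts (hP : IsPathEdges G v w P) (hvw : v ≠ w) :
    v ∈ edgeVerts P := by
  obtain ⟨p, -, rfl⟩ := hP
  simpa [edgeVerts] using (p.mem_support_iff_exists_mem_edges_of_not_nil
    (Walk.not_nil_of_ne hvw)).mp p.start_mem_support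

lemma IsPathEdges.right_mem_edgeVerts (hP : IsPathEdges G v w P) (hvw : v ≠ w) :
    w ∈ edgeVerts P :=
  hP.symm.left_mem_edgeVerts hvw.symm

lemma edgeVerts_inter_subset_of_isPath_append {p : G.Walk v x} {q : G.Walk x w}
    (hpq : (p.append q).IsPath) :
    edgeVerts p.edges.toFinset ∩ edgeVerts q.edges.toFinset ⊆ {x} := by
  rintro z ⟨hzp, hzq⟩
  by_contra hzx
  exact hpq.ne_of_mem_support_of_append hzx (mem_support_of_mem_edgeVerts hzp)
    (mem_support_of_mem_edgeVerts hzq) rfl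

lemma IsPathEdges.exists_union_eq_of_mem_edgeVerts (hP : IsPathEdges G v w P)
    (hx : x ∈ edgeVerts P) :
    ∃ Q R, IsPathEdges G v x Q ∧ IsPathEdges G x w R ∧ Q ∪ R = P ∧
      edgeVerts Q ∩ edgeVerts R ⊆ {x} := by
  obtain ⟨p, hp, rfl⟩ := hP
  obtain ⟨q, r, hq, hr, rfl⟩ :=
    hp.mem_support_iff_exists_append.mp (mem_support_of_mem_edgeVerts hx)
  exact ⟨_, _, ⟨q, hq, rfl⟩, ⟨r, hr, rfl⟩, by simp, edgeVerts_inter_subset_of_isPath_append hp⟩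

lemma IsPathEdges.exists_first_return {S : Set V} (hP : IsPathEdges G v w P)
    (hvw : v ≠ w) (hw : w ∈ S) :
    ∃ x ∈ S, ∃ Q R, v ≠ x ∧ IsPathEdges G v x Q ∧ IsPathEdges G x w R ∧ Q ∪ R = P ∧ R ⊂ P ∧
      edgeVerts Q ∩ S ⊆ {v, x} := by
  classical
  obtain ⟨p, hp, rfl⟩ := hP
  obtain ⟨x, hxS, hx, hfirst⟩ := p.exists_mem_support_forall_mem_support_imp_eq
    {z ∈ p.support.toFinset | z ∈ S ∧ z ≠ v} ⟨w, by simp [hw, hvw.symm]⟩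
  simp only [mem_filter, List.mem_toFinset] at hxS hfirst
  obtain ⟨-, hxS, hxv⟩ := hxS
  set q := p.takeUntil x hx
  set r := p.dropUntil x hx
  have hqr : q.append r = p := p.take_spec hx
  have hq : IsPathEdges G v x q.edges.toFinset := ⟨q, hp.takeUntil hx, rfl⟩
  have hunion : q.edges.toFinset ∪ r.edges.toFinset = p.edges.toFinset := by
    rw [← hqr, Walk.edges_append, List.toFinset_append]
  refine ⟨x, hxS, _, _, hxv.symm, hq, ⟨r, hp.dropUntil hx, rfl⟩, hunion, ?_, ?_⟩
  · refine ⟨hunion ▸ subset_union_right, fun hpr => hxv.symm ?_⟩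
    have hvq := hq.left_mem_edgeVerts hxv.symm
    have hqr' : q.edges.toFinset ⊆ r.edges.toFinset := (hunion ▸ subset_union_left).trans hpr
    exact edgeVerts_inter_subset_of_isPath_append (hqr ▸ hp) ⟨hvq, edgeVerts_mono hqr' hvq⟩
  · rintro z ⟨hzq, hzS⟩
    have hz := mem_support_of_mem_edgeVerts hzq
    exact or_iff_not_imp_left.mpr fun hzv =>
      hfirst z ⟨p.support_takeUntil_subset_support hx hz, hzS, hzv⟩ hz

lemma IsPathEdges.subset_or_subset {S : Set V} (hP : IsPathEdges G v w P)
    (hBB' : edgeVerts B ∩ edgeVerts B' ⊆ S) (hPB : P ⊆ B ∪ B')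
    (hPS : edgeVerts P ∩ S ⊆ {v, w}) : P ⊆ B ∨ P ⊆ B' := by
  obtain ⟨p, hp, rfl⟩ := hP
  induction p with
  | nil => simp
  | @cons a b c hab p ih =>
    rw [Walk.cons_isPath_iff] at hp
    rw [Walk.edges_cons, List.toFinset_cons] at hPB hPS ⊢
    simp only [insert_subset_iff] at hPB ⊢
    have hmem_p : ∀ z ∈ edgeVerts p.edges.toFinset, z ∈ S → z = c := fun z hz hzS =>
      (hPS ⟨edgeVerts_mono (subset_insert _ _) hz, hzS⟩).resolve_left fun hza =>
        hp.2 (hza ▸ mem_support_of_mem_edgeVerts hz)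
    have hp_side := ih hp.1 hPB.2 fun z hz => Or.inr (hmem_p z hz.1 hz.2)
    by_cases hbc : b = c
    · subst hbc
      simpa [(Walk.isPath_iff_nil.mp hp.1).eq_nil] using hPB.1
    · have hb : b ∈ edgeVerts p.edges.toFinset :=
        IsPathEdges.left_mem_edgeVerts ⟨p, hp.1, rfl⟩ hbc
      have hbS : b ∉ S := fun hbS => hbc (hmem_p b hb hbS)
      have hb_of_mem {D : Finset (Sym2 V)} (hD : s(a, b) ∈ D) : b ∈ edgeVerts D :=
        ⟨_, hD, Sym2.mem_mk_right a b⟩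
      rcases hp_side, mem_union.mp hPB.1 with ⟨hpB | hpB', hB | hB'⟩
      · exact Or.inl ⟨hB, hpB⟩
      · exact absurd (hBB' ⟨edgeVerts_mono hpB hb, hb_of_mem hB'⟩) hbS
      · exact absurd (hBB' ⟨hb_of_mem hB, edgeVerts_mono hpB' hb⟩) hbS
      · exact Or.inr ⟨hB', hpB'⟩

lemma IsCycleEdges.exists_isPathEdges (hC : IsCycleEdges G C) (hvw : v ≠ w)
    (hv : v ∈ edgeVerts C) (hw : w ∈ edgeVerts C) :
    ∃ P Q, IsPathEdges G v w P ∧ IsPathEdges G v w Q ∧ P ∪ Q = C ∧ Disjoint P Q ∧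
      edgeVerts P ∩ edgeVerts Q ⊆ {v, w} := by
  obtain ⟨u, c, hc, rfl⟩ := hC
  have hvc : v ∈ c.support := mem_support_of_mem_edgeVerts hv
  have hrotate : (c.rotate v hvc).edges.toFinset = c.edges.toFinset :=
    List.toFinset_eq_of_perm _ _ (c.rotate_edges v hvc).perm
  rw [← hrotate] at hw ⊢
  replace hc := hc.rotate hvc
  generalize c.rotate v hvc = d at hc hw ⊢
  obtain ⟨p, q, rfl⟩ := Walk.mem_support_iff_exists_append.mp
    (mem_support_of_mem_edgeVerts hw)
  have hp := hc.isPath_of_append_left (Walk.not_nil_of_ne hvw.symm)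
  have hq := hc.isPath_of_append_right (Walk.not_nil_of_ne hvw)
  have hedges : p.edges.Disjoint q.edges :=
    List.disjoint_of_nodup_append (p.edges_append q ▸ hc.edges_nodup)
  have hsupport : p.support.tail.Disjoint q.support.tail :=
    List.disjoint_of_nodup_append (p.tail_support_append q ▸ hc.support_nodup)
  refine ⟨_, _, ⟨p, hp, rfl⟩, IsPathEdges.symm ⟨q, hq, rfl⟩, by simp,
    List.disjoint_toFinset_iff_disjoint.mpr hedges, ?_⟩
  rintro z ⟨hzp, hzq⟩
  rcases p.mem_support_iff.mp (mem_support_of_mem_edgeVerts hzp) with hzv | hzp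
  · exact Or.inl hzv
  rcases q.mem_support_iff.mp (mem_support_of_mem_edgeVerts hzq) with hzw | hzq
  · exact Or.inr hzw
  · exact absurd hzq (hsupport hzp)

/-- The exchange half of uncrossability: a path `P₂` of `C₂` with only its endpoints on `C₁` closes
up with some path `P₁` of `C₁` to a cycle of the family. It provides the successive cycles in the
induction of `WeaklyUncrossable.good_union_or_good_union`. -/
def WeaklyUncrossable (G : SimpleGraph V) (𝒞 : Set (Finset (Sym2 V))) : Prop :=
  ∀ C₁ ∈ 𝒞, ∀ C₂ ∈ 𝒞, ∀ v w : V, v ≠ w → ∀ P₂ : Finset (Sym2 V),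
    IsPathEdges G v w P₂ → P₂ ⊆ C₂ →
    edgeVerts P₂ ∩ edgeVerts C₁ ⊆ {v, w} →
    v ∈ edgeVerts C₁ → w ∈ edgeVerts C₁ →
    ∃ P₁ : Finset (Sym2 V), IsPathEdges G v w P₁ ∧ P₁ ⊆ C₁ ∧ P₁ ∪ P₂ ∈ 𝒞

lemma Uncrossable.weaklyUncrossable (h : Uncrossable G 𝒞) : WeaklyUncrossable G 𝒞 :=
  fun C₁ hC₁ C₂ hC₂ v w hvw P₂ hP₂ hP₂C₂ hmeet hv hw =>
    let ⟨P₁, hP₁, hP₁C₁, hexchange, _⟩ := h C₁ hC₁ C₂ hC₂ v w hvw P₂ hP₂ hP₂C₂ hmeet hv hw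
    ⟨P₁, hP₁, hP₁C₁, hexchange⟩

omit [DecidableEq V] in
lemma Good.mono (h : Good 𝒞 s) (hst : s ⊆ t) : Good 𝒞 t :=
  let ⟨C, hC, hCs⟩ := h
  ⟨C, hC, hCs.trans hst⟩

lemma WeaklyUncrossable.good_union_or_good_union (h : WeaklyUncrossable G 𝒞) (hC : C ∈ 𝒞)
    (hP : IsPathEdges G v w P) (hPC : P ⊆ C) (hvw : v ≠ w) (hD : B ∪ B' ∈ 𝒞)
    (hBB' : edgeVerts B ∩ edgeVerts B' ⊆ {v, w})
    (hv : v ∈ edgeVerts (B ∪ B')) (hw : w ∈ edgeVerts (B ∪ B')) :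
    Good 𝒞 (P ∪ B) ∨ Good 𝒞 (P ∪ B') := by
  induction P using Finset.strongInduction generalizing v B B' with | H P ih =>
  obtain ⟨x, hxD, Q, R, hvx, hQ, hR, rfl, hRP, hQD⟩ := hP.exists_first_return hvw hw
  obtain ⟨S, hS, hSD, hSQ⟩ :=
    h _ hD C hC v x hvx Q hQ (subset_union_left.trans hPC) hQD hv hxD
  by_cases hwS : w ∈ edgeVerts S ∧ x ≠ w
  · obtain ⟨hwS, hxw⟩ := hwS
    obtain ⟨S₁, S₂, hS₁, hS₂, rfl, hS₁₂⟩ := hS.exists_union_eq_of_mem_edgeVerts hwS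
    obtain ⟨hS₁D, hS₂D⟩ := union_subset_iff.mp hSD
    have hvS₂ : v ∉ edgeVerts S₂ := fun hv₂ => hvw (hS₁₂ ⟨hS₁.left_mem_edgeVerts hvw, hv₂⟩)
    have hmeet : edgeVerts S₂ ∩ edgeVerts (S₁ ∪ Q) ⊆ {x, w} := by
      rw [edgeVerts_union]
      rintro z ⟨hz₂, hz₁ | hzQ⟩
      · exact Or.inr (hS₁₂ ⟨hz₁, hz₂⟩)
      · exact Or.inl ((hQD ⟨hzQ, edgeVerts_mono hS₂D hz₂⟩).resolve_left (hvS₂ <| · ▸ hz₂))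
    have hR_good : Good 𝒞 (R ∪ S₂) ∨ Good 𝒞 (R ∪ (S₁ ∪ Q)) :=
      ih R hRP hR (subset_union_right.trans hPC) hxw
        (by rwa [union_left_comm, ← union_assoc]) hmeet
        (edgeVerts_mono subset_union_left (hS₂.right_mem_edgeVerts hxw.symm))
        (edgeVerts_mono subset_union_left (hS₂.left_mem_edgeVerts hxw.symm))
    have hS₁_side : S₁ ⊆ B ∨ S₁ ⊆ B' := hS₁.subset_or_subset hBB' hS₁D Set.inter_subset_right
    have hS₂_side : S₂ ⊆ B ∨ S₂ ⊆ B' := hS₂.subset_or_subset hBB' hS₂D <| by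
      rintro z ⟨hz₂, rfl | hzw⟩
      exacts [absurd hz₂ hvS₂, Or.inl hzw]
    rcases hR_good with hgood | hgood
    · exact hS₂_side.imp (fun hB => hgood.mono (by grind)) (fun hB' => hgood.mono (by grind))
    · exact hS₁_side.imp (fun hB => hgood.mono (by grind)) (fun hB' => hgood.mono (by grind))
  · have hS_side : S ⊆ B ∨ S ⊆ B' := hS.subset_or_subset hBB' hSD <| by
      rintro z ⟨hz, rfl | rfl⟩
      exacts [Or.inl rfl, Or.inr (by_contra fun hzx => hwS ⟨hz, Ne.symm hzx⟩)]
    exact hS_side.imp (fun hB => ⟨_, hSQ, by grind⟩) (fun hB' => ⟨_, hSQ, by grind⟩)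

theorem uncrossable_stronglyUncrossable_general (hcyc : ∀ s ∈ 𝒞, IsCycleEdges G s)
    (h : WeaklyUncrossable G 𝒞) : StronglyUncrossable G 𝒞 := by
  intro C₁ hC₁ C₂ hC₂ v w hvw hv₁ hv₂ hw₁ hw₂
  obtain ⟨P, P', hP, hP', rfl, hPP', hmeet₁⟩ := (hcyc C₁ hC₁).exists_isPathEdges hvw hv₁ hw₁
  obtain ⟨Q, Q', hQ, hQ', rfl, hQQ', hmeet₂⟩ := (hcyc C₂ hC₂).exists_isPathEdges hvw hv₂ hw₂
  have rowP : Good 𝒞 (P ∪ Q) ∨ Good 𝒞 (P ∪ Q') :=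
    h.good_union_or_good_union hC₁ hP subset_union_left hvw hC₂ hmeet₂ hv₂ hw₂
  have rowP' : Good 𝒞 (P' ∪ Q) ∨ Good 𝒞 (P' ∪ Q') :=
    h.good_union_or_good_union hC₁ hP' subset_union_right hvw hC₂ hmeet₂ hv₂ hw₂
  have colQ : Good 𝒞 (P ∪ Q) ∨ Good 𝒞 (P' ∪ Q) := by
    simpa only [union_comm Q] using
      h.good_union_or_good_union hC₂ hQ subset_union_left hvw hC₁ hmeet₁ hv₁ hw₁
  have colQ' : Good 𝒞 (P ∪ Q') ∨ Good 𝒞 (P' ∪ Q') := by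
    simpa only [union_comm Q'] using
      h.good_union_or_good_union hC₂ hQ' subset_union_right hvw hC₁ hmeet₁ hv₁ hw₁
  have diagonal : (Good 𝒞 (P ∪ Q) ∧ Good 𝒞 (P' ∪ Q')) ∨
      (Good 𝒞 (P ∪ Q') ∧ Good 𝒞 (P' ∪ Q)) := by tauto
  rcases diagonal with ⟨hgood, hgood'⟩ | ⟨hgood, hgood'⟩
  · refine ⟨P, Q, hP, subset_union_left, hQ, subset_union_left, hgood, ?_⟩
    rwa [union_sdiff_cancel_left hPP', union_sdiff_cancel_left hQQ']
  · refine ⟨P, Q', hP, subset_union_left, hQ', subset_union_right, hgood, ?_⟩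
    rwa [union_sdiff_cancel_left hPP', union_sdiff_cancel_right hQQ']

/-- Every uncrossable family of cycles is strongly uncrossable. -/
theorem uncrossable_stronglyUncrossable (G : SimpleGraph V)
    (𝒞 : Set (Finset (Sym2 V))) (hcyc : ∀ s ∈ 𝒞, IsCycleEdges G s)
    (h : Uncrossable G 𝒞) : StronglyUncrossable G 𝒞 :=
  uncrossable_stronglyUncrossable_general hcyc h.weaklyUncrossable
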